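/- Let p be an odd prime, G a finite powerful p-group, i ≥ 1 and 0 ≤ j ≤ i. Then [Ω_{i-j}(G^{p^{2+j}}), Ω_i(G^p)] ≤ (Ω_i(G^{p²}))^{p^{j+2}}. -/

import Mathlib

/-!
Write `P k = G ^ (p ^ k)` and `E(n, k)` for the set of elements of `P k` of order dividing `p ^ n`.

In a finite powerful `p`-group with `p` odd, `⁅P a, P b⁆ ≤ P (a + b + 1)` and every element of
`P (k + 1)` is a `p`-th power of an element of `P k` (`isPowerFiltration_powerSeq`). On top of this
the heart of the proof is the following statement (`exists_omegaFiltration`): for every `M`, the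
sets `V k = E(M + 1 - k, k)` and `W k = E(M - k, k)` are subgroups, and
`⁅V k, W l⁆ ≤ V (k + l + 1)`. It is proved by descending induction on `M`. When `p ^ M` is at least
the exponent of `G`, both filtrations equal `P`. In the inductive step (`omegaFiltration_step`) the
relation `⁅V' k, V l⁆ ≤ V' (k + l + 1)`, with `V' k = E(M + 2 - k, k)`, bounds double commutators so
well that all `p`-th powers of products can be expanded by the class-two formula
`(c u) ^ p = c ^ p u ^ p ⁅c, u⁆ ^ (- p.choose 2)`, in which `p ∣ p.choose 2`:

* if `w ^ p ^ M = 1` and `v ∈ V 0`, comparing `w ^ p ^ M` with the same power of the conjugate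
  `⁅v, w⁆ w` yields `⁅v, w⁆ ^ p ^ M = 1` (`commutator_mem_one`);
* passing from `u` to `u ^ p` propagates this to `⁅V k, w⁆ ≤ V (k + 1)` (`commutator_mem_succ`);
* hence `W k` is a subgroup (`mul_pow_eq_one`), and passing from `z` to `z ^ p` in the second
  argument gives the bracket relation for `V` and `W`.

For `M = i + 1` the two given subgroups are `V (j + 2)` and `W 1`, so their commutators lie in
`V (j + 4) = E(i - j - 2, j + 4)`. Such an element is trivial if `i < j + 2`; otherwise it equals
`u ^ p ^ (j + 2)` with `u ∈ P 2`, and then `u ^ p ^ i = 1`.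
-/

/-- The subgroup generated by the `n`-th powers of the elements of `H`. -/
def subgroupPow {G : Type*} [Group G] (H : Subgroup G) (n : ℕ) : Subgroup G :=
  Subgroup.closure {x | ∃ h ∈ H, h ^ n = x}

/-- `Ω_i(H)`: the subgroup generated by the elements of `H` whose order divides `p ^ i`. -/
def omegaSubgroup {G : Type*} [Group G] (p i : ℕ) (H : Subgroup G) : Subgroup G :=
  Subgroup.closure {x | x ∈ H ∧ x ^ p ^ i = 1}

/-- A finite `p`-group `G` is powerful if `[G,G] ≤ G^p` when `p` is odd,
and `[G,G] ≤ G^4` when `p = 2`. -/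
def IsPowerful (p : ℕ) (G : Type*) [Group G] : Prop :=
  if p = 2 then commutator G ≤ subgroupPow (⊤ : Subgroup G) 4
  else commutator G ≤ subgroupPow (⊤ : Subgroup G) p

/-- The subgroup of `n`-th powers of the whole group is normal (indeed characteristic). -/
instance subgroupPow_top_normal {G : Type*} [Group G] (n : ℕ) :
    (subgroupPow (⊤ : Subgroup G) n).Normal := by
  constructor
  intro x hx g
  have key : Subgroup.map (MulAut.conj g).toMonoidHom (subgroupPow (⊤ : Subgroup G) n)
      ≤ subgroupPow (⊤ : Subgroup G) n := by
    rw [subgroupPow, MonoidHom.map_closure]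
    apply Subgroup.closure_le _ |>.mpr
    rintro y ⟨z, ⟨h, -, rfl⟩, rfl⟩
    exact Subgroup.subset_closure ⟨(MulAut.conj g) h, trivial, by
      simp [((MulAut.conj g).toMonoidHom.map_pow h n).symm]⟩
  have hmem : (MulAut.conj g) x ∈
      Subgroup.map (MulAut.conj g).toMonoidHom (subgroupPow (⊤ : Subgroup G) n) :=
    Subgroup.mem_map_of_mem _ hx
  simpa [MulAut.conj_apply] using key hmem

/-- A powerfully central chain `{1} = H 0 ≤ H 1 ≤ ⋯ ≤ H n = G` of length `n`:
`[H (k+1), G] ≤ (H k)^p` for all `k < n`. -/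
def IsPowerfullyCentralChain (p : ℕ) {G : Type*} [Group G] (n : ℕ) (H : ℕ → Subgroup G) : Prop :=
  H 0 = ⊥ ∧ H n = ⊤ ∧ (∀ k, k < n → H k ≤ H (k + 1)) ∧
    ∀ k, k < n → ⁅H (k + 1), (⊤ : Subgroup G)⁆ ≤ subgroupPow (H k) p

/-- A group is powerfully nilpotent if it is powerful and admits a powerfully central chain. -/
def IsPowerfullyNilpotent (p : ℕ) (G : Type*) [Group G] : Prop :=
  IsPowerful p G ∧ ∃ (n : ℕ) (H : ℕ → Subgroup G), IsPowerfullyCentralChain p n H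

/-- The powerful nilpotency class: the least possible length of a powerfully central chain. -/
noncomputable def powerfulNilpotencyClass (p : ℕ) (G : Type*) [Group G] : ℕ :=
  sInf {n | ∃ H : ℕ → Subgroup G, IsPowerfullyCentralChain p n H}

open scoped commutatorElement

/-! ### Congruences for `p`-th powers -/

section Congruences

variable {G : Type*} [Group G]

/-- The class-two collection formula, with `d = ⁅c, u⁆` commuting with `c` and `u`. -/
theorem class_two_pow {c u d : G} (hd : c * u = d * (u * c)) (hdc : Commute d c)
    (hdu : Commute d u) (n : ℕ) : (c * u) ^ n * d ^ n.choose 2 = c ^ n * u ^ n := by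
  have hcu : ∀ n : ℕ, c * u ^ n = d ^ n * (u ^ n * c) := by
    intro n
    induction n with
    | zero => simp
    | succ n ih =>
      calc c * u ^ (n + 1) = (c * u ^ n) * u := by rw [pow_succ, mul_assoc]
        _ = d ^ n * u ^ n * (c * u) := by rw [ih]; group
        _ = d ^ n * (u ^ n * d) * (u * c) := by rw [hd]; group
        _ = d ^ n * (d * u ^ n) * (u * c) := by rw [(hdu.pow_right n).eq]
        _ = d ^ (n + 1) * (u ^ (n + 1) * c) := by rw [pow_succ, pow_succ]; group
  induction n with
  | zero => simp
  | succ n ih =>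
    have h2 : (n + 1).choose 2 = n.choose 2 + n := by
      rw [Nat.choose_succ_succ' n 1, Nat.choose_one_right, add_comm]
    have hc : Commute (d ^ n.choose 2) (c * u) := (hdc.mul_right hdu).pow_left _
    have hn : Commute (d ^ n) (u ^ n * c) := ((hdu.pow_right n).mul_right hdc).pow_left n
    have hn' : Commute (d ^ n) u := hdu.pow_left n
    calc (c * u) ^ (n + 1) * d ^ (n + 1).choose 2
        = (c * u) ^ n * ((c * u) * d ^ n.choose 2) * d ^ n := by
          rw [h2, pow_succ, pow_add]; group
      _ = ((c * u) ^ n * d ^ n.choose 2) * (c * u) * d ^ n := by rw [← hc.eq]; group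
      _ = c ^ n * (u ^ n * c) * (u * d ^ n) := by rw [ih]; group
      _ = c ^ n * ((u ^ n * c) * d ^ n) * u := by rw [← hn'.eq]; group
      _ = c ^ n * (c * u ^ n) * u := by rw [← hn.eq, hcu]
      _ = c ^ (n + 1) * u ^ (n + 1) := by rw [pow_succ, pow_succ]; group

theorem commute_mk {N : Subgroup G} [N.Normal] {a b : G} (h : ⁅a, b⁆ ∈ N) :
    Commute (a : G ⧸ N) (b : G ⧸ N) := by
  rw [← commutatorElement_eq_one_iff_commute]
  exact (QuotientGroup.eq_one_iff ⁅a, b⁆).2 h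

theorem pow_mk_eq_one {N : Subgroup G} [N.Normal] {a : G} {n : ℕ} (h : a ^ n ∈ N) :
    (a : G ⧸ N) ^ n = 1 :=
  (QuotientGroup.eq_one_iff (a ^ n)).2 h

/-- `p`-th powers are multiplicative modulo `N` on `c`, `u` when `⁅c, u⁆` has order dividing `p`
modulo `N` and commutes with `c` and `u` there; oddness of `p` gives `p ∣ p.choose 2`. -/
theorem mul_pow_mk {p : ℕ} (hp : Odd p) {N : Subgroup G} [N.Normal] {c u : G}
    (h1 : ⁅c, u⁆ ^ p ∈ N) (h2 : ⁅⁅c, u⁆, c⁆ ∈ N) (h3 : ⁅⁅c, u⁆, u⁆ ∈ N) :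
    ((c : G ⧸ N) * u) ^ p = (c : G ⧸ N) ^ p * (u : G ⧸ N) ^ p := by
  have h := class_two_pow (c := (c : G ⧸ N)) (u := u) (d := (⁅c, u⁆ : G))
    (by
      rw [← QuotientGroup.mk_mul, ← QuotientGroup.mk_mul, ← QuotientGroup.mk_mul]
      congr 1
      rw [commutatorElement_def]; group) (commute_mk h2) (commute_mk h3) p
  have hdvd : p ∣ p.choose 2 := by
    obtain ⟨k, rfl⟩ := hp
    refine ⟨k, ?_⟩
    rw [Nat.choose_two_right]
    apply Nat.div_eq_of_eq_mul_left two_pos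
    rw [Nat.add_sub_cancel]; ring
  obtain ⟨m, hm⟩ := hdvd
  rw [hm, pow_mul, pow_mk_eq_one h1, one_pow, mul_one] at h
  exact h

/-- If moreover `⁅w, u⁆ ^ p ∈ N`, then `w` commutes with `u ^ p` modulo `N`. -/
theorem commutator_pow_mem {p : ℕ} (hp : Odd p) {N : Subgroup G} [N.Normal] {w u : G}
    (h0 : ⁅w, u⁆ ^ p ∈ N) (h1 : ⁅⁅w, u⁆, u⁆ ^ p ∈ N)
    (h2 : ⁅⁅⁅w, u⁆, u⁆, ⁅w, u⁆⁆ ∈ N) (h3 : ⁅⁅⁅w, u⁆, u⁆, u⁆ ∈ N) :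
    ⁅w, u ^ p⁆ ∈ N := by
  have h := mul_pow_mk hp h1 h2 h3
  rw [pow_mk_eq_one h0, one_mul] at h
  rw [← QuotientGroup.eq_one_iff]
  have e : ⁅w, u ^ p⁆ = (⁅w, u⁆ * u) ^ p * (u ^ p)⁻¹ := by
    have : ⁅w, u⁆ * u = w * u * w⁻¹ := by rw [commutatorElement_def]; group
    rw [this, conj_pow, commutatorElement_def]
  rw [e, QuotientGroup.mk_mul, QuotientGroup.mk_inv, QuotientGroup.mk_pow, QuotientGroup.mk_mul, h,
    QuotientGroup.mk_pow, mul_inv_cancel]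

theorem commutator_mem_symm {N : Subgroup G} {a b : G} (h : ⁅a, b⁆ ∈ N) : ⁅b, a⁆ ∈ N := by
  rw [← commutatorElement_inv]; exact N.inv_mem h

theorem exists_mul_of_mk_eq {N : Subgroup G} [N.Normal] {a b : G} (h : (a : G ⧸ N) = b) :
    ∃ e ∈ N, a = e * b := by
  refine ⟨a * b⁻¹, ?_, by group⟩
  rw [← QuotientGroup.eq_one_iff, QuotientGroup.mk_mul, QuotientGroup.mk_inv, h, mul_inv_cancel]

end Congruences

/-! ### The power filtration of a powerful group -/

section Filtration

variable {G : Type*} [Group G]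

theorem pow_mem_subgroupPow {H : Subgroup G} {n : ℕ} {x : G} (hx : x ∈ H) :
    x ^ n ∈ subgroupPow H n :=
  Subgroup.subset_closure ⟨x, hx, rfl⟩

theorem subgroupPow_normal (H : Subgroup G) [hH : H.Normal] (n : ℕ) : (subgroupPow H n).Normal := by
  refine ⟨fun x hx g => ?_⟩
  refine Subgroup.closure_induction (p := fun x _ => g * x * g⁻¹ ∈ subgroupPow H n) ?_ ?_ ?_ ?_ hx
  · rintro _ ⟨h, hh, rfl⟩
    rw [← conj_pow]
    exact pow_mem_subgroupPow (hH.conj_mem h hh g)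
  · simp
  · intro a b _ _ ha hb
    simpa using mul_mem ha hb
  · intro a _ ha
    simpa [mul_assoc] using inv_mem ha

/-- In a nilpotent group, an inclusion of `A` in a normal subgroup may be checked
modulo `⁅A, G⁆`. -/
theorem le_of_le_sup_commutator [Group.IsNilpotent G] {A B : Subgroup G} [B.Normal]
    (h : A ≤ B ⊔ ⁅A, (⊤ : Subgroup G)⁆) : A ≤ B := by
  have key : ∀ n, A ≤ B ⊔ (⊤ : Subgroup G).lowerCentralSeries n := by
    intro n
    induction n with
    | zero => simp
    | succ n ih =>
      refine h.trans (sup_le le_sup_left ?_)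
      rw [Subgroup.commutator_le]
      intro a ha g _
      obtain ⟨b, hb, c, hc, rfl⟩ := Subgroup.mem_sup_of_normal_left.1 (ih ha)
      rw [commutatorElement_mul_left_eq_conj_mul]
      have hbB : b ∈ B ⊔ (⊤ : Subgroup G).lowerCentralSeries (n + 1) :=
        Subgroup.mem_sup_left hb
      have hcg : ⁅c, g⁆ ∈ B ⊔ (⊤ : Subgroup G).lowerCentralSeries (n + 1) :=
        Subgroup.mem_sup_right (Subgroup.commutator_mem_commutator hc (Subgroup.mem_top g))
      have hbg : ⁅b, g⁆ ∈ B ⊔ (⊤ : Subgroup G).lowerCentralSeries (n + 1) :=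
        Subgroup.mem_sup_left (Subgroup.commutator_le_left B ⊤
          (Subgroup.commutator_mem_commutator hb (Subgroup.mem_top _)))
      exact mul_mem (mul_mem (mul_mem hbB hcg) (inv_mem hbB)) hbg
  obtain ⟨n, hn⟩ := Subgroup.nilpotent_iff_lowerCentralSeries.1 ‹_›
  simpa [hn] using key n

/-- If `N` is powerfully embedded then so is `N ^ p`. Working modulo `⁅⁅N ^ p, G⁆, G⁆`, the
expansion of `⁅g, x ^ p⁆` needs only the class-two formula. -/
theorem powerfullyEmbedded_pow [Group.IsNilpotent G] {p : ℕ} (hp : Odd p) (N : Subgroup G)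
    [N.Normal] (h : ⁅N, (⊤ : Subgroup G)⁆ ≤ subgroupPow N p) :
    ⁅subgroupPow N p, (⊤ : Subgroup G)⁆ ≤ subgroupPow (subgroupPow N p) p := by
  have n1 := subgroupPow_normal N p
  have n2 := subgroupPow_normal (subgroupPow N p) p
  apply le_of_le_sup_commutator
  set B := subgroupPow (subgroupPow N p) p with hB
  set A := ⁅subgroupPow N p, (⊤ : Subgroup G)⁆ with hA
  set K := B ⊔ ⁅A, (⊤ : Subgroup G)⁆ with hK
  have hgen : ∀ x ∈ N, ∀ g : G, ⁅g, x ^ p⁆ ∈ K := by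
    intro x hx g
    have hc : ⁅g, x⁆ ∈ subgroupPow N p :=
      commutator_mem_symm (h (Subgroup.commutator_mem_commutator hx (Subgroup.mem_top _)))
    have hd : ⁅⁅g, x⁆, x⁆ ∈ A := Subgroup.commutator_mem_commutator hc (Subgroup.mem_top _)
    have hdA : ∀ y, ⁅⁅⁅g, x⁆, x⁆, y⁆ ∈ K := fun y =>
      Subgroup.mem_sup_right (Subgroup.commutator_mem_commutator hd (Subgroup.mem_top _))
    have hdN : ⁅⁅g, x⁆, x⁆ ∈ subgroupPow N p := Subgroup.commutator_le_left _ ⊤ hd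
    exact commutator_pow_mem hp (Subgroup.mem_sup_left (pow_mem_subgroupPow hc))
      (Subgroup.mem_sup_left (pow_mem_subgroupPow hdN)) (hdA _) (hdA _)
  rw [hA, Subgroup.commutator_comm, Subgroup.commutator_le]
  intro g _ y hy
  rw [← QuotientGroup.eq_one_iff]
  refine (commutatorElement_eq_one_iff_commute.2 ?_ : ⁅(g : G ⧸ K), (y : G ⧸ K)⁆ = 1)
  refine Subgroup.closure_induction (p := fun (y : G) _ => Commute (g : G ⧸ K) (y : G ⧸ K))
    ?_ ?_ ?_ ?_ hy
  · rintro _ ⟨x, hx, rfl⟩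
    exact commute_mk (hgen x hx g)
  · exact Commute.one_right _
  · intro a b _ _ ha hb
    exact ha.mul_right hb
  · intro a _ ha
    exact ha.inv_right

/-- A nontrivial finite `p`-group has a normal subgroup of index `p`, so it is not generated by its
`p`-th powers. -/
theorem card_subgroupPow_lt [Finite G] {p : ℕ} (hp : p.Prime) (hG : IsPGroup p G) {H : Subgroup G}
    (hH : H ≠ ⊥) : Nat.card (subgroupPow H p) < Nat.card H := by
  have : Fact p.Prime := ⟨hp⟩
  obtain ⟨n, hn⟩ := IsPGroup.iff_card.1 (hG.to_subgroup H)
  have hn0 : n ≠ 0 := by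
    rintro rfl
    exact hH (Subgroup.eq_bot_of_card_eq H (by simpa using hn))
  obtain ⟨m, rfl⟩ := Nat.exists_eq_succ_of_ne_zero hn0
  obtain ⟨M, hM⟩ := Sylow.exists_subgroup_card_pow_prime (G := H) p (n := m)
    (hn ▸ pow_dvd_pow p (Nat.le_succ m))
  have hidx : M.index = p := by
    have h := M.card_mul_index
    rw [hM, hn, pow_succ] at h
    exact Nat.eq_of_mul_eq_mul_left (pow_pos hp.pos m) h
  have hMn : M.Normal := by
    apply Subgroup.normal_of_index_eq_minFac_card
    rw [hidx, hn, Nat.Prime.pow_minFac hp (Nat.succ_ne_zero m)]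
  have hle : subgroupPow H p ≤ M.map H.subtype := by
    refine (Subgroup.closure_le _).2 ?_
    rintro _ ⟨x, hx, rfl⟩
    refine ⟨(⟨x, hx⟩ : H) ^ p, ?_, rfl⟩
    have := M.pow_index_mem (⟨x, hx⟩ : H)
    rwa [hidx] at this
  calc Nat.card (subgroupPow H p) ≤ Nat.card (M.map H.subtype) := Subgroup.card_le_of_le hle
    _ = p ^ m := by rw [Subgroup.card_map_of_injective H.subtype_injective, hM]
    _ < Nat.card H := by rw [hn]; exact Nat.pow_lt_pow_right hp.one_lt (Nat.lt_succ_self m)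

/-- The iterated power series `G, G ^ p, (G ^ p) ^ p, …`. -/
def powerSeq (p : ℕ) (G : Type*) [Group G] : ℕ → Subgroup G
  | 0 => ⊤
  | k + 1 => subgroupPow (powerSeq p G k) p

/-- The properties of the filtration `P k = G ^ (p ^ k)` of a powerful group on which the
argument rests. -/
structure IsPowerFiltration (p : ℕ) (P : ℕ → Subgroup G) : Prop where
  normal : ∀ k, (P k).Normal
  zero : P 0 = ⊤
  anti : Antitone P
  pow_mem : ∀ {k x}, x ∈ P k → x ^ p ∈ P (k + 1)
  root : ∀ {k x}, x ∈ P (k + 1) → ∃ u ∈ P k, u ^ p = x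
  comm : ∀ {a b x y}, x ∈ P a → y ∈ P b → ⁅x, y⁆ ∈ P (a + b + 1)

theorem IsPowerFiltration.pow_mem_iterate {p : ℕ} {P : ℕ → Subgroup G}
    (hP : IsPowerFiltration p P) {k : ℕ} {x : G} (hx : x ∈ P k) (t : ℕ) :
    x ^ p ^ t ∈ P (k + t) := by
  induction t with
  | zero => simpa using hx
  | succ t ih =>
    rw [pow_succ, pow_mul]
    exact hP.pow_mem ih

theorem IsPowerFiltration.root_iterate {p : ℕ} {P : ℕ → Subgroup G}
    (hP : IsPowerFiltration p P) {k t : ℕ} {x : G} (hx : x ∈ P (k + t)) :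
    ∃ u ∈ P k, u ^ p ^ t = x := by
  induction t generalizing x with
  | zero => exact ⟨x, hx, by simp⟩
  | succ t ih =>
    obtain ⟨v, hv, rfl⟩ := hP.root hx
    obtain ⟨u, hu, rfl⟩ := ih hv
    exact ⟨u, hu, by rw [pow_succ, pow_mul]⟩

/-- The iterated power series of a finite powerful `p`-group, `p` odd, is a power filtration and
reaches the trivial subgroup. -/
theorem isPowerFiltration_powerSeq [Finite G] {p : ℕ} (hp : p.Prime) (hp2 : p ≠ 2)
    (hG : IsPGroup p G) (hpow : IsPowerful p G) :
    IsPowerFiltration p (powerSeq p G) ∧ ∃ L, powerSeq p G L = ⊥ := by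
  have hodd : Odd p := hp.odd_of_ne_two hp2
  have : Fact p.Prime := ⟨hp⟩
  have : Group.IsNilpotent G := hG.isNilpotent
  set P := powerSeq p G with hP
  have hn : ∀ k, (P k).Normal := by
    intro k
    induction k with
    | zero => exact (inferInstance : (⊤ : Subgroup G).Normal)
    | succ k ih => exact subgroupPow_normal (P k) p
  have hpm : ∀ {k x}, x ∈ P k → x ^ p ∈ P (k + 1) := fun hx => pow_mem_subgroupPow hx
  have hle : ∀ k, P (k + 1) ≤ P k := by
    intro k
    refine (Subgroup.closure_le _).2 ?_
    rintro _ ⟨x, hx, rfl⟩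
    exact pow_mem hx p
  have hanti : Antitone P := antitone_nat_of_succ_le hle
  have hPE : ∀ k, ⁅P k, (⊤ : Subgroup G)⁆ ≤ P (k + 1) := by
    intro k
    induction k with
    | zero =>
      rw [IsPowerful, if_neg hp2] at hpow
      exact hpow
    | succ k ih => exact powerfullyEmbedded_pow hodd (P k) ih
  have hPe : ∀ {k x} (y : G), x ∈ P k → ⁅x, y⁆ ∈ P (k + 1) := fun y hx =>
    hPE _ (Subgroup.commutator_mem_commutator hx (Subgroup.mem_top _))
  -- `x ↦ x ^ p` is multiplicative modulo `P (l + 2)` on products with a factor in `P l`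
  have hmul : ∀ {l u} (v : G), u ∈ P l →
      ((u : G ⧸ P (l + 2)) * v) ^ p = (u : G ⧸ P (l + 2)) ^ p * (v : G ⧸ P (l + 2)) ^ p := by
    intro l u v hu
    exact mul_pow_mk hodd (hpm (hPe v hu)) (hPe _ (hPe v hu)) (hPe _ (hPe v hu))
  have hL : ∃ L, P L = ⊥ := by
    have key : ∀ k, P k = ⊥ ∨ Nat.card (P k) + k ≤ Nat.card G := by
      intro k
      induction k with
      | zero => exact Or.inr (Subgroup.card_le_card_group _)
      | succ k ih =>
        by_cases hk : P k = ⊥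
        · exact Or.inl (le_bot_iff.1 (hk ▸ hle k))
        · have h1 := card_subgroupPow_lt hp hG hk
          have h2 := ih.resolve_left hk
          have h3 : Nat.card (P (k + 1)) < Nat.card (P k) := h1
          omega
    refine ⟨Nat.card G, (key _).resolve_right fun h => ?_⟩
    have : 0 < Nat.card (P (Nat.card G)) := Nat.card_pos
    omega
  have hroot1 : ∀ {k x}, x ∈ P (k + 1) → ∃ u ∈ P k,
      (x : G ⧸ P (k + 2)) = (u : G ⧸ P (k + 2)) ^ p := by
    intro k x hx
    refine Subgroup.closure_induction
      (p := fun (x : G) _ => ∃ u ∈ P k, (x : G ⧸ P (k + 2)) = (u : G ⧸ P (k + 2)) ^ p) ?_ ?_ ?_ ?_ hx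
    · rintro _ ⟨x, hx, rfl⟩
      exact ⟨x, hx, rfl⟩
    · exact ⟨1, one_mem _, by simp⟩
    · rintro a b _ _ ⟨u, hu, ha⟩ ⟨v, hv, hb⟩
      exact ⟨u * v, mul_mem hu hv, by
        rw [QuotientGroup.mk_mul, QuotientGroup.mk_mul, hmul v hu, ha, hb]⟩
    · rintro a _ ⟨u, hu, ha⟩
      exact ⟨u⁻¹, inv_mem hu, by rw [QuotientGroup.mk_inv, QuotientGroup.mk_inv, ha, inv_pow]⟩
  -- successive approximation of a `p`-th root, the error moving down the series
  have hroot2 : ∀ {k x}, x ∈ P (k + 1) → ∀ t, ∃ u ∈ P k,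
      (x : G ⧸ P (k + t + 2)) = (u : G ⧸ P (k + t + 2)) ^ p := by
    intro k x hx t
    induction t with
    | zero => exact hroot1 hx
    | succ t ih =>
      obtain ⟨u, hu, hxu⟩ := ih
      obtain ⟨e, he, hxe⟩ := exists_mul_of_mk_eq (b := u ^ p) hxu
      obtain ⟨v, hv, hev⟩ := hroot1 (k := k + t + 1) he
      refine ⟨v * u, mul_mem (hanti (by omega) hv) hu, ?_⟩
      have := hmul (l := k + t + 1) u hv
      rw [show k + (t + 1) + 2 = k + t + 1 + 2 by omega, hxe, QuotientGroup.mk_mul,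
        QuotientGroup.mk_mul, this, hev, QuotientGroup.mk_pow]
  have hroot : ∀ {k x}, x ∈ P (k + 1) → ∃ u ∈ P k, u ^ p = x := by
    intro k x hx
    obtain ⟨L, hL⟩ := hL
    obtain ⟨u, hu, h⟩ := hroot2 hx L
    obtain ⟨e, he, rfl⟩ := exists_mul_of_mk_eq (b := u ^ p) h
    have : e ∈ P L := hanti (by omega) he
    rw [hL, Subgroup.mem_bot] at this
    exact ⟨u, hu, by rw [this, one_mul]⟩
  refine ⟨⟨hn, rfl, hanti, hpm, hroot, ?_⟩, hL⟩
  intro a b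
  induction b with
  | zero => intro x y hx _; exact hPe y hx
  | succ b ih =>
    intro x y hx hy
    obtain ⟨z, hz, rfl⟩ := hroot hy
    have hc := ih hx hz
    have hd := hPe z hc
    exact commutator_pow_mem hodd (hpm hc) (pow_mem hd p) (hle _ (hPe _ hd)) (hle _ (hPe _ hd))

theorem powerSeq_eq {p : ℕ} (hP : IsPowerFiltration p (powerSeq p G)) (k : ℕ) :
    powerSeq p G k = subgroupPow ⊤ (p ^ k) := by
  refine le_antisymm (fun x hx => ?_) ((Subgroup.closure_le _).2 ?_)
  · obtain ⟨u, -, rfl⟩ := hP.root_iterate (k := 0) (by simpa using hx)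
    exact pow_mem_subgroupPow (Subgroup.mem_top u)
  · rintro _ ⟨x, -, rfl⟩
    simpa using hP.pow_mem_iterate (k := 0) (x := x) (by rw [hP.zero]; exact Subgroup.mem_top x) k

end Filtration

/-! ### Elements of bounded order in the power filtration -/

section Omega

variable {G : Type*} [Group G] {p : ℕ} {P : ℕ → Subgroup G}

/-- `W k` is, for every `k`, the set of elements of `P k` of order dividing `p ^ (M - k)`; in
particular these sets are subgroups. The truncated subtraction makes `W k` trivial for `k ≥ M`. -/
def IsOmegaFiltration (p : ℕ) (P : ℕ → Subgroup G) (M : ℕ) (W : ℕ → Subgroup G) : Prop :=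
  ∀ k x, x ∈ W k ↔ x ∈ P k ∧ x ^ p ^ (M - k) = 1

theorem IsOmegaFiltration.normal (hP : IsPowerFiltration p P) {M : ℕ} {W : ℕ → Subgroup G}
    (hW : IsOmegaFiltration p P M W) (k : ℕ) : (W k).Normal := by
  refine ⟨fun x hx g => ?_⟩
  rw [hW] at hx ⊢
  exact ⟨(hP.normal k).conj_mem x hx.1 g, by rw [conj_pow, hx.2]; simp⟩

theorem IsOmegaFiltration.eq_one {M : ℕ} {W : ℕ → Subgroup G}
    (hW : IsOmegaFiltration p P M W) {k : ℕ} (hk : M ≤ k) {x : G} (hx : x ∈ W k) : x = 1 := by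
  have := ((hW k x).1 hx).2
  rwa [Nat.sub_eq_zero_of_le hk, pow_zero, pow_one] at this

theorem pow_prime_pow_eq_one_of_le {x : G} {m n : ℕ} (h : x ^ p ^ m = 1) (hmn : m ≤ n) :
    x ^ p ^ n = 1 := by
  obtain ⟨t, rfl⟩ := Nat.exists_eq_add_of_le hmn
  rw [pow_add, pow_mul, h, one_pow]

theorem IsOmegaFiltration.anti (hP : IsPowerFiltration p P) {M : ℕ} {W : ℕ → Subgroup G}
    (hW : IsOmegaFiltration p P M W) {k l : ℕ} (hkl : k ≤ l) : W l ≤ W k := by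
  intro x hx
  rw [hW] at hx ⊢
  exact ⟨hP.anti hkl hx.1, pow_prime_pow_eq_one_of_le hx.2 (by omega)⟩

theorem IsOmegaFiltration.pow_mem (hP : IsPowerFiltration p P) {M : ℕ} {W : ℕ → Subgroup G}
    (hW : IsOmegaFiltration p P M W) {k : ℕ} {x : G} (hx : x ∈ W k) : x ^ p ∈ W (k + 1) := by
  by_cases hk : M ≤ k
  · rw [hW.eq_one hk hx, one_pow]; exact one_mem _
  · rw [hW] at hx ⊢
    refine ⟨hP.pow_mem hx.1, ?_⟩
    rw [← pow_mul, ← pow_succ', show M - (k + 1) + 1 = M - k by omega]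
    exact hx.2

theorem IsOmegaFiltration.root (hP : IsPowerFiltration p P) {M : ℕ} {W : ℕ → Subgroup G}
    (hW : IsOmegaFiltration p P M W) {k : ℕ} {x : G} (hx : x ∈ W (k + 1)) :
    ∃ u ∈ W k, u ^ p = x := by
  by_cases hk : M ≤ k
  · rw [hW.eq_one (by omega : M ≤ k + 1) hx]
    exact ⟨1, one_mem _, one_pow p⟩
  · rw [hW] at hx
    obtain ⟨u, hu, rfl⟩ := hP.root hx.1
    refine ⟨u, (hW _ _).2 ⟨hu, ?_⟩, rfl⟩
    have := hx.2
    rwa [← pow_mul, ← pow_succ', show M - (k + 1) + 1 = M - k by omega] at this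

theorem IsOmegaFiltration.pow_mem_iterate (hP : IsPowerFiltration p P) {M : ℕ}
    {W : ℕ → Subgroup G} (hW : IsOmegaFiltration p P M W) {k : ℕ} {x : G} (hx : x ∈ W k) (t : ℕ) :
    x ^ p ^ t ∈ W (k + t) := by
  induction t with
  | zero => simpa using hx
  | succ t ih =>
    rw [pow_succ, pow_mul]
    exact hW.pow_mem hP ih

theorem IsOmegaFiltration.le_succ {M : ℕ} {W V : ℕ → Subgroup G}
    (hW : IsOmegaFiltration p P M W) (hV : IsOmegaFiltration p P (M + 1) V) (k : ℕ) :
    W k ≤ V k := by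
  intro x hx
  rw [hW] at hx
  exact (hV _ _).2 ⟨hx.1, pow_prime_pow_eq_one_of_le hx.2 (by omega)⟩

theorem IsOmegaFiltration.succ_le (hP : IsPowerFiltration p P) {M : ℕ} {W V : ℕ → Subgroup G}
    (hW : IsOmegaFiltration p P M W) (hV : IsOmegaFiltration p P (M + 1) V) (k : ℕ) :
    V (k + 1) ≤ W k := by
  intro x hx
  rw [hV] at hx
  exact (hW _ _).2 ⟨hP.anti (Nat.le_succ k) hx.1, pow_prime_pow_eq_one_of_le hx.2 (by omega)⟩

section Descent

variable {M : ℕ} {V' V : ℕ → Subgroup G}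

/-- Comparing `w ^ p ^ M = 1` with its conjugate `(⁅v, w⁆ * w) ^ p ^ M = 1`, while expanding the
latter modulo the terms of `V'`, shows that `⁅v, w⁆` has order dividing `p ^ M`. -/
theorem commutator_mem_one (hp : Odd p) (hP : IsPowerFiltration p P)
    (hV' : IsOmegaFiltration p P (M + 2) V') (hV : IsOmegaFiltration p P (M + 1) V)
    (hbr : ∀ {k l x y}, x ∈ V' k → y ∈ V l → ⁅x, y⁆ ∈ V' (k + l + 1))
    {v w : G} (hv : v ∈ V 0) (hw : w ^ p ^ M = 1) : ⁅v, w⁆ ∈ V 1 := by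
  have hn := hV'.normal hP
  have hwV : w ∈ V 0 :=
    (hV _ _).2 ⟨by rw [hP.zero]; trivial, pow_prime_pow_eq_one_of_le hw (by omega)⟩
  set c := ⁅v, w⁆ with hc
  have hcV : c ∈ V' 1 := hbr (hV.le_succ hV' 0 hv) hwV
  have key : ∀ t, (((c * w) ^ p ^ t : G) : G ⧸ V' (t + 2)) = ((c ^ p ^ t * w ^ p ^ t : G)) := by
    intro t
    induction t with
    | zero => simp
    | succ t ih =>
      obtain ⟨e, he, h⟩ := exists_mul_of_mk_eq ih
      set a := c ^ p ^ t with ha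
      set b := w ^ p ^ t with hb
      have haV : a ∈ V' (t + 1) := by
        have := hV'.pow_mem_iterate hP hcV t
        rwa [add_comm] at this
      have hbV : b ∈ V t := by simpa using hV.pow_mem_iterate hP hwV t
      have heV : e ∈ V' (t + 1) := hV'.anti hP (by omega) he
      have hea : e * a ∈ V' (t + 1) := mul_mem heV haV
      have hea' : e * a ∈ V t := hV.succ_le hP hV' t hea
      have hd : ⁅e * a, b⁆ ∈ V' (t + 2) := hV'.anti hP (by omega) (hbr hea hbV)
      have h1 := mul_pow_mk (N := V' (t + 3)) hp (c := e * a) (u := b) (hV'.pow_mem hP hd)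
        (hV'.anti hP (by omega) (hbr hd hea')) (hV'.anti hP (by omega) (hbr hd hbV))
      have h2 : Commute (e : G ⧸ V' (t + 3)) (a : G ⧸ V' (t + 3)) :=
        commute_mk (hV'.anti hP (by omega) (hbr he (hV.succ_le hP hV' t haV)))
      have h3 : (e : G ⧸ V' (t + 3)) ^ p = 1 := pow_mk_eq_one (hV'.pow_mem hP he)
      rw [QuotientGroup.mk_mul, h2.mul_pow, h3, one_mul] at h1
      rw [show t + 1 + 2 = t + 3 by omega, pow_succ p t, pow_mul, pow_mul, pow_mul, h, ← mul_assoc]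
      exact h1
  have hM := key M
  have hcw : (c * w) ^ p ^ M = 1 := by
    have : c * w = v * w * v⁻¹ := by rw [hc, commutatorElement_def]; group
    rw [this, conj_pow, hw]; simp
  rw [hcw, hw, mul_one] at hM
  obtain ⟨e, he, h⟩ := exists_mul_of_mk_eq hM
  rw [hV'.eq_one le_rfl he, one_mul] at h
  exact (hV _ _).2 ⟨((hV' _ _).1 hcV).1, h.symm⟩

/-- Elements of order dividing `p ^ M` shift the filtration `V` by one. Each element of `V (k + 1)`
is some `u ^ p` with `u ∈ V k`; the double commutators in the expansion of `⁅w, u ^ p⁆` are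
controlled by the bracket relation between `V'` and `V`. -/
theorem commutator_mem_succ (hp : Odd p) (hP : IsPowerFiltration p P)
    (hV' : IsOmegaFiltration p P (M + 2) V') (hV : IsOmegaFiltration p P (M + 1) V)
    (hbr : ∀ {k l x y}, x ∈ V' k → y ∈ V l → ⁅x, y⁆ ∈ V' (k + l + 1))
    {k : ℕ} {v w : G} (hv : v ∈ V k) (hw : w ^ p ^ M = 1) : ⁅v, w⁆ ∈ V (k + 1) := by
  have hn := hV.normal hP
  induction k generalizing v with
  | zero => exact commutator_mem_one hp hP hV' hV hbr hv hw
  | succ k ih =>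
    obtain ⟨u, hu, rfl⟩ := hV.root hP hv
    have hc : ⁅w, u⁆ ∈ V (k + 1) := commutator_mem_symm (ih hu)
    have hd : ⁅⁅w, u⁆, u⁆ ∈ V (k + 1) :=
      Subgroup.commutator_le_left _ ⊤ (Subgroup.commutator_mem_commutator hc (Subgroup.mem_top u))
    have hd' : ⁅⁅w, u⁆, u⁆ ∈ V' (k + 2) :=
      hV'.anti hP (by omega) (hbr (hV.le_succ hV' _ hc) hu)
    have hdd : ∀ y ∈ V 0, ⁅⁅⁅w, u⁆, u⁆, y⁆ ∈ V (k + 1 + 1) := fun y hy =>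
      hV.succ_le hP hV' (k + 2) (hbr (k := k + 2) (l := 0) hd' hy)
    exact commutator_mem_symm (commutator_pow_mem hp (hV.pow_mem hP hc) (hV.pow_mem hP hd)
      (hdd _ (hV.anti hP (Nat.zero_le _) hc)) (hdd _ (hV.anti hP (Nat.zero_le _) hu)))

/-- The elements of `P k` of order dividing `p ^ (M - k)` are closed under products:
`(x * y) ^ p ^ t` agrees with `x ^ p ^ t * y ^ p ^ t` modulo `V (k + t + 1)`, and
`V (M + 1)` is trivial. -/
theorem mul_pow_eq_one (hp : Odd p) (hP : IsPowerFiltration p P)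
    (hV : IsOmegaFiltration p P (M + 1) V)
    (hs : ∀ {k v w}, v ∈ V k → w ^ p ^ M = 1 → ⁅v, w⁆ ∈ V (k + 1))
    {k : ℕ} {x y : G} (hxP : x ∈ P k) (hyP : y ∈ P k) (hx : x ^ p ^ (M - k) = 1)
    (hy : y ^ p ^ (M - k) = 1) : (x * y) ^ p ^ (M - k) = 1 := by
  have hn := hV.normal hP
  by_cases hk : M < k
  · rw [Nat.sub_eq_zero_of_le hk.le, pow_zero, pow_one] at *
    rw [hx, hy, one_mul]
  have hxV : x ∈ V k := (hV _ _).2 ⟨hxP, pow_prime_pow_eq_one_of_le hx (by omega)⟩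
  have hyV : y ∈ V k := (hV _ _).2 ⟨hyP, pow_prime_pow_eq_one_of_le hy (by omega)⟩
  have hxM : ∀ t, (x ^ p ^ t) ^ p ^ M = 1 := fun t => by
    rw [← pow_mul, mul_comm, pow_mul, pow_prime_pow_eq_one_of_le hx (Nat.sub_le M k), one_pow]
  have hyM : ∀ t, (y ^ p ^ t) ^ p ^ M = 1 := fun t => by
    rw [← pow_mul, mul_comm, pow_mul, pow_prime_pow_eq_one_of_le hy (Nat.sub_le M k), one_pow]
  have key : ∀ t, (((x * y) ^ p ^ t : G) : G ⧸ V (k + t + 1)) = ((x ^ p ^ t * y ^ p ^ t : G)) := by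
    intro t
    induction t with
    | zero => simp
    | succ t ih =>
      obtain ⟨e, he, h⟩ := exists_mul_of_mk_eq ih
      have haV : x ^ p ^ t ∈ V (k + t) := hV.pow_mem_iterate hP hxV t
      have hd : ⁅x ^ p ^ t, y ^ p ^ t⁆ ∈ V (k + t + 1) := hs haV (hyM t)
      have h1 := mul_pow_mk (N := V (k + t + 1 + 1)) hp (hV.pow_mem hP hd)
        (hs hd (hxM t)) (hs hd (hyM t))
      have h2 : Commute (e : G ⧸ V (k + t + 1 + 1))
          ((x ^ p ^ t : G) * (y ^ p ^ t : G) : G ⧸ V (k + t + 1 + 1)) :=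
        (commute_mk (hs he (hxM t))).mul_right (commute_mk (hs he (hyM t)))
      have h3 : (e : G ⧸ V (k + t + 1 + 1)) ^ p = 1 := pow_mk_eq_one (hV.pow_mem hP he)
      rw [show k + (t + 1) + 1 = k + t + 1 + 1 by omega, pow_succ p t, pow_mul, pow_mul, pow_mul, h,
        QuotientGroup.mk_pow, QuotientGroup.mk_mul, QuotientGroup.mk_mul, h2.mul_pow, h3, one_mul]
      exact h1
  have hM := key (M - k)
  rw [hx, hy, mul_one] at hM
  obtain ⟨e, he, h⟩ := exists_mul_of_mk_eq hM
  rwa [hV.eq_one (by omega) he, one_mul] at h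

/-- The inductive step, from orders bounded by `p ^ (M + 1)` to orders bounded by `p ^ M`. -/
theorem omegaFiltration_step (hp : Odd p) (hP : IsPowerFiltration p P)
    (hV' : IsOmegaFiltration p P (M + 2) V') (hV : IsOmegaFiltration p P (M + 1) V)
    (hbr : ∀ {k l x y}, x ∈ V' k → y ∈ V l → ⁅x, y⁆ ∈ V' (k + l + 1)) :
    ∃ W, IsOmegaFiltration p P M W ∧
      ∀ {k l x y}, x ∈ V k → y ∈ W l → ⁅x, y⁆ ∈ V (k + l + 1) := by
  have hs : ∀ {k v w}, v ∈ V k → w ^ p ^ M = 1 → ⁅v, w⁆ ∈ V (k + 1) :=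
    fun hv hw => commutator_mem_succ hp hP hV' hV hbr hv hw
  have hn := hV.normal hP
  let W : ℕ → Subgroup G := fun k =>
    { carrier := {x | x ∈ P k ∧ x ^ p ^ (M - k) = 1}
      one_mem' := ⟨one_mem _, one_pow _⟩
      mul_mem' := fun {x y} hx hy =>
        ⟨mul_mem hx.1 hy.1, mul_pow_eq_one hp hP hV hs hx.1 hy.1 hx.2 hy.2⟩
      inv_mem' := fun {x} hx => ⟨inv_mem hx.1, by rw [inv_pow, hx.2, inv_one]⟩ }
  have hW : IsOmegaFiltration p P M W := fun k x => Iff.rfl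
  have hWM : ∀ {l y}, y ∈ W l → y ^ p ^ M = 1 := fun {l y} hy =>
    pow_prime_pow_eq_one_of_le ((hW l y).1 hy).2 (Nat.sub_le M l)
  refine ⟨W, hW, ?_⟩
  intro k l
  induction l with
  | zero => intro x y hx hy; exact hs hx (hWM hy)
  | succ l ih =>
    intro x y hx hy
    obtain ⟨z, hz, rfl⟩ := hW.root hP hy
    have hc := ih hx hz
    have hd := hs hc (hWM hz)
    have hdd : ∀ y, ⁅⁅⁅x, z⁆, z⁆, y⁆ ∈ V (k + l + 1 + 1) := fun y =>
      Subgroup.commutator_le_left _ ⊤ (Subgroup.commutator_mem_commutator hd (Subgroup.mem_top y))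
    exact commutator_pow_mem hp (hV.pow_mem hP hc) (_root_.pow_mem hd p) (hdd _) (hdd _)

end Descent

/-- For every `M`, the elements of bounded order form filtrations `V` (bound `p ^ (M + 1)`) and
`W` (bound `p ^ M`) with `⁅V k, W l⁆ ≤ V (k + l + 1)`, by descent from `M` so large that both
coincide with `P`. -/
theorem exists_omegaFiltration (hp : Odd p) (hP : IsPowerFiltration p P) (hL : ∃ L, P L = ⊥)
    (M : ℕ) : ∃ V W, IsOmegaFiltration p P (M + 1) V ∧ IsOmegaFiltration p P M W ∧
      ∀ {k l x y}, x ∈ V k → y ∈ W l → ⁅x, y⁆ ∈ V (k + l + 1) := by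
  obtain ⟨L, hL⟩ := hL
  have hbig : ∀ N, L ≤ N → IsOmegaFiltration p P N P := by
    intro N hN k x
    refine ⟨fun hx => ⟨hx, ?_⟩, fun hx => hx.1⟩
    have h := hP.pow_mem_iterate hx (N - k)
    have h' := hP.anti (show L ≤ k + (N - k) by omega) h
    rwa [hL, Subgroup.mem_bot] at h'
  have key : ∀ t M, L ≤ M + t → ∃ V W, IsOmegaFiltration p P (M + 1) V ∧
      IsOmegaFiltration p P M W ∧
      ∀ {k l x y}, x ∈ V k → y ∈ W l → ⁅x, y⁆ ∈ V (k + l + 1) := by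
    intro t
    induction t with
    | zero =>
      intro M hM
      exact ⟨P, P, hbig _ (by omega), hbig _ (by omega), fun hx hy => hP.comm hx hy⟩
    | succ t ih =>
      intro M hM
      obtain ⟨V', V, hV', hV, hbr⟩ := ih (M + 1) (by omega)
      obtain ⟨W, hW, h⟩ := omegaFiltration_step hp hP hV' hV hbr
      exact ⟨V, W, hV, hW, h⟩
  exact key L M (by omega)

theorem IsOmegaFiltration.omegaSubgroup_eq {M : ℕ} {W : ℕ → Subgroup G}
    (hW : IsOmegaFiltration p P M W) (k : ℕ) : omegaSubgroup p (M - k) (P k) = W k := by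
  have : {x | x ∈ P k ∧ x ^ p ^ (M - k) = 1} = (W k : Set G) := by
    ext x; exact (hW k x).symm
  rw [omegaSubgroup, this, Subgroup.closure_eq]

end Omega

theorem omega_statement_8 (p : ℕ) (hp : p.Prime) (hp2 : p ≠ 2) (G : Type*) [Group G]
    [Finite G] (hG : IsPGroup p G) (hpow : IsPowerful p G) (i j : ℕ) (hi : 1 ≤ i)
    (hj : j ≤ i) :
    ⁅omegaSubgroup p (i - j) (subgroupPow (⊤ : Subgroup G) (p ^ (2 + j))),
        omegaSubgroup p i (subgroupPow (⊤ : Subgroup G) p)⁆ ≤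
      subgroupPow (omegaSubgroup p i (subgroupPow (⊤ : Subgroup G) (p ^ 2)))
        (p ^ (j + 2)) := by 
  obtain ⟨hP, hL⟩ := isPowerFiltration_powerSeq hp hp2 hG hpow
  obtain ⟨V, W, hV, hW, hbr⟩ := exists_omegaFiltration (hp.odd_of_ne_two hp2) hP hL (i + 1)
  have e1 : omegaSubgroup p (i - j) (subgroupPow (⊤ : Subgroup G) (p ^ (2 + j))) = V (2 + j) := by
    rw [← powerSeq_eq hP, ← hV.omegaSubgroup_eq]
    congr 1
    omega
  have e2 : omegaSubgroup p i (subgroupPow (⊤ : Subgroup G) p) = W 1 := by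
    have h := hW.omegaSubgroup_eq 1
    rwa [powerSeq_eq hP, pow_one, Nat.add_sub_cancel] at h
  rw [e1, e2, Subgroup.commutator_le]
  intro x hx y hy
  have h := hbr hx hy
  by_cases hij : i < j + 2
  · rw [hV.eq_one (by omega) h]
    exact one_mem _
  · obtain ⟨hcP, hc⟩ := (hV _ _).1 h
    obtain ⟨u, hu, huc⟩ := hP.root_iterate (k := 2) (t := j + 2)
      (by rwa [show 2 + j + 1 + 1 = 2 + (j + 2) by omega] at hcP)
    rw [← huc]
    refine pow_mem_subgroupPow (Subgroup.subset_closure ⟨?_, ?_⟩)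
    · rwa [← powerSeq_eq hP]
    · rw [← huc, ← pow_mul, ← pow_add,
        show j + 2 + (i + 1 + 1 - (2 + j + 1 + 1)) = i by omega] at hc
      exact hc
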